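/- Let (G,T) be a bipartite graft, F a minimum join of (G,T), and r ∈ V(G). Let K be a decapital distance component of (G,T) with respect to r, with F-beam e, F-root r_K and F-antiroot s_K. Let r' ∈ V(G)\V(K) be K-congruent to r, and let P be a path between r' and a vertex x ∈ V(K) such that V(P) ∩ V(K) = {x}. If w_F(P) = dist_F(r', r_K), then x = r_K. -/

import Mathlib

/-!
If `x ≠ rK`, prolong `P` by an edge set `Q` inside `K` joining `x` to `rK`, of weight at most `0`,
and by the beam. The three parts are disjoint, so this joins `r'` to `sK` with weight at most
`dist(r', rK) - 1 < dist(r', sK)`. Since `F` is minimum, an edge set joining two vertices cannot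
weigh less than their distance (`distF_le`), a contradiction.

It remains to find `Q` (`exists_inner`). Edge sets are described by their mod-2 boundary, and
`mu G t` is the minimum size of an edge set with boundary `t`. By `mu_eq_distF`, `mu` at the
boundary of `F` plus `x` plus `y` is `|F| + dist(x, y)`. With `S` the boundary of `F` plus `r`,
`K` is thus a component of a sublevel set of `f(v) = mu (S + v)`. The tool is `exchange`: two
edge sets with boundaries `X`, `Y` that differ at `a` can be switched along a common path from `a`
to another vertex of `X + Y`. It gives two facts.

* `no_cross`: for `k ∈ K`, minimum edge sets with boundary `S + k` do not cross the cut of `K`.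
* `shift_root`: `K` is also a component of a sublevel set after replacing `r` by `sK`, that is,
  `S` by `S + r + sK`.

For the new root, `F` minus the beam is a minimum edge set belonging to `rK`. By `no_cross` it does
not cross the cut of `K`, and neither does a minimum edge set belonging to `x`, which is not larger.
The part of their symmetric difference inside `K` is `Q`.
-/

namespace TightCuts

open SimpleGraph

variable {V : Type*}

/-- `(G, T)` is a graft: every connected component of `G` contains an even
number of vertices of `T`. -/
def IsGraft (G : SimpleGraph V) (T : Set V) : Prop :=
  ∀ c : G.ConnectedComponent, Even ((T ∩ {v | G.connectedComponentMk v = c}).ncard)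

/-- `F` is a join of the graft `(G, T)`: a set of edges such that a vertex is
incident with an odd number of edges of `F` exactly when it lies in `T`. -/
def IsJoin (G : SimpleGraph V) (T : Set V) (F : Set (Sym2 V)) : Prop :=
  F ⊆ G.edgeSet ∧ ∀ v : V, (Odd ({e ∈ F | v ∈ e}).ncard ↔ v ∈ T)

/-- `ν(G, T)`: the minimum size of a join of `(G, T)`. -/
noncomputable def nu (G : SimpleGraph V) (T : Set V) : ℕ :=
  sInf {n | ∃ F : Set (Sym2 V), IsJoin G T F ∧ F.ncard = n}

/-- `F` is a minimum join of `(G, T)`. -/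
def IsMinJoin (G : SimpleGraph V) (T : Set V) (F : Set (Sym2 V)) : Prop :=
  IsJoin G T F ∧ F.ncard = nu G T

open Classical in
/-- The `F`-weight of an edge: `-1` if the edge lies in `F`, `+1` otherwise. -/
noncomputable def edgeWt (F : Set (Sym2 V)) (e : Sym2 V) : ℤ :=
  if e ∈ F then -1 else 1

/-- The `F`-weight of a walk: the sum of the `F`-weights of its edges. -/
noncomputable def walkWt (F : Set (Sym2 V)) {G : SimpleGraph V} {x y : V}
    (p : G.Walk x y) : ℤ :=
  (p.edges.map (edgeWt F)).sum

/-- The `F`-distance between `x` and `y`: the minimum `F`-weight of a path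
between `x` and `y`. -/
noncomputable def distF (G : SimpleGraph V) (F : Set (Sym2 V)) (x y : V) : ℤ :=
  sInf {n : ℤ | ∃ p : G.Walk x y, p.IsPath ∧ walkWt F p = n}

/-- `K` is (the vertex set of) a connected component of the subgraph of `G`
induced by `U`. -/
def IsComponentOf (G : SimpleGraph V) (U K : Set V) : Prop :=
  K.Nonempty ∧ K ⊆ U ∧ (G.induce K).Connected ∧
    ∀ x ∈ K, ∀ y ∈ U, G.Adj x y → y ∈ K

/-- `K` is a distance component of the graft with respect to root `r` at level `i`
(with respect to a minimum join `F`): `i` is attained as an `F`-distance from `r`,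
and `K` is a connected component of the subgraph induced by the vertices at
`F`-distance at most `i` from `r`. -/
def IsDistCompAt (G : SimpleGraph V) (F : Set (Sym2 V)) (r : V) (i : ℤ) (K : Set V) : Prop :=
  (∃ x, distF G F r x = i) ∧ IsComponentOf G {x | distF G F r x ≤ i} K

/-- `K` is a decapital distance component with respect to root `r`: a distance
component (at some level) not containing `r`. -/
def IsDecapDistComp (G : SimpleGraph V) (F : Set (Sym2 V)) (r : V) (K : Set V) : Prop :=
  ∃ i : ℤ, IsDistCompAt G F r i K ∧ r ∉ K

/-- The edge cut `δ_G(K)`: edges of `G` with exactly one end in `K`. -/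
def cutEdges (G : SimpleGraph V) (K : Set V) : Set (Sym2 V) :=
  {e | e ∈ G.edgeSet ∧ ∃ x y, e = s(x, y) ∧ x ∈ K ∧ y ∉ K}

/-- An edge is allowed in `(G, T)` if some minimum join contains it. -/
def Allowed (G : SimpleGraph V) (T : Set V) (e : Sym2 V) : Prop :=
  ∃ F, IsMinJoin G T F ∧ e ∈ F

/-- Two vertices are factor-connected if there is a walk between them all of
whose edges are allowed. -/
def FactorConnected (G : SimpleGraph V) (T : Set V) (u v : V) : Prop :=
  ∃ p : G.Walk u v, ∀ e ∈ p.edges, Allowed G T e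

/-- `C` is (the vertex set of) a factor-component of `(G, T)`: an equivalence
class of factor-connectivity. -/
def IsFactorComponent (G : SimpleGraph V) (T : Set V) (C : Set V) : Prop :=
  ∃ v, C = {u | FactorConnected G T u v}

/-- The Kotzig–Lovász relation: `u ∼ v` iff `u = v`, or `u` and `v` are
factor-connected (hence in the same factor-component) and
`ν(G, T) = ν(G, T Δ {u, v})`. -/
def klRel (G : SimpleGraph V) (T : Set V) (u v : V) : Prop :=
  u = v ∨ (FactorConnected G T u v ∧ nu G T = nu G (symmDiff T {u, v}))

/-- `S` is a Kotzig–Lovász class of `(G, T)`. -/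
def IsKLClass (G : SimpleGraph V) (T : Set V) (S : Set V) : Prop :=
  ∃ v, S = {u | klRel G T u v}

/-- `A(K)` for a distance component `K` at level `i`: the vertices of `K` at
`F`-distance exactly `i` from `r`. -/
def AK (G : SimpleGraph V) (F : Set (Sym2 V)) (r : V) (i : ℤ) (K : Set V) : Set V :=
  K ∩ {x | distF G F r x = i}

/-- `D(K) = V(K) \ A(K)`. -/
def DK (G : SimpleGraph V) (F : Set (Sym2 V)) (r : V) (i : ℤ) (K : Set V) : Set V :=
  K \ AK G F r i K

/-- `S` is the root class of `K`: a Kotzig–Lovász class containing all ends in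
`K` of allowed edges of the cut `δ_G(K)`. -/
def IsRootClass (G : SimpleGraph V) (T : Set V) (K S : Set V) : Prop :=
  IsKLClass G T S ∧ ∀ e ∈ cutEdges G K, Allowed G T e → ∀ u ∈ e, u ∈ K → u ∈ S

/-- `S` is the antiroot class of `K`: a Kotzig–Lovász class containing all ends
outside `K` of allowed edges of the cut `δ_G(K)`. -/
def IsAntirootClass (G : SimpleGraph V) (T : Set V) (K S : Set V) : Prop :=
  IsKLClass G T S ∧ ∀ e ∈ cutEdges G K, Allowed G T e → ∀ u ∈ e, u ∉ K → u ∈ S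

/-- The family `𝒜(K)`: the root fragment `K ∩ S_K` together with all
Kotzig–Lovász classes other than `S_K` that contain a vertex of `A(K)`. -/
def famA (G : SimpleGraph V) (T : Set V) (F : Set (Sym2 V)) (r : V) (i : ℤ)
    (K S_K : Set V) : Set (Set V) :=
  insert (K ∩ S_K) {S | IsKLClass G T S ∧ S ≠ S_K ∧ (S ∩ AK G F r i K).Nonempty}

/-- `L` is adjacent to a vertex of `S` by an allowed edge. -/
def AdjAllowed (G : SimpleGraph V) (T : Set V) (L S : Set V) : Prop :=
  ∃ x ∈ L, ∃ s ∈ S, G.Adj x s ∧ Allowed G T s(x, s)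

/-- `𝒩_K(S)`: the family of connected components of `G[D(K)]` adjacent to a
vertex of `S` by an allowed edge. -/
def NKfam (G : SimpleGraph V) (T : Set V) (F : Set (Sym2 V)) (r : V) (i : ℤ)
    (K S : Set V) : Set (Set V) :=
  {L | IsComponentOf G (DK G F r i K) L ∧ AdjAllowed G T L S}

/-- `U_K(S)`: the union of the vertex sets of the members of `𝒩_K(S)`. -/
def UK (G : SimpleGraph V) (T : Set V) (F : Set (Sym2 V)) (r : V) (i : ℤ)
    (K S : Set V) : Set V :=
  ⋃₀ NKfam G T F r i K S

/-- `X` is an `F`-negative set for `S`: `X` is disjoint from `S` and every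
`x ∈ X` admits a path of negative `F`-weight from `x` to a vertex of `S` whose
vertices, except the end in `S`, all lie in `X`. -/
def IsNegSet (G : SimpleGraph V) (F : Set (Sym2 V)) (S X : Set V) : Prop :=
  X ⊆ Sᶜ ∧ ∀ x ∈ X, ∃ y ∈ S, ∃ p : G.Walk x y, p.IsPath ∧ walkWt F p < 0 ∧
    ∀ v ∈ p.support, v ≠ y → v ∈ X

/-- The maximum `F`-negative set for `S`: the union of all `F`-negative sets
for `S`. -/
def maxNegSet (G : SimpleGraph V) (F : Set (Sym2 V)) (S : Set V) : Set V :=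
  ⋃₀ {X | IsNegSet G F S X}

/-- The maximum `F`-negative set for `S` avoiding `Y`. -/
def maxNegSetAvoiding (G : SimpleGraph V) (F : Set (Sym2 V)) (S Y : Set V) : Set V :=
  ⋃₀ {X | IsNegSet G F S X ∧ Disjoint X Y}

section Helpers

variable [DecidableEq V]

/-! ### Boundaries of edge sets -/

/-- The mod-2 boundary of a finite edge set: at each vertex, the parity of the number of
incident edges. A join of `(G, T)` is an edge set whose boundary is the indicator of `T`. -/
def bd (J : Finset (Sym2 V)) : V → ZMod 2 :=
  fun v => ∑ e ∈ J, if v ∈ e then 1 else 0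

/-- The indicator of a single vertex, as a mod-2 function. Adding `pt v` to a boundary
corresponds to taking the symmetric difference with `{v}`. -/
def pt (v : V) : V → ZMod 2 := fun u => if u = v then 1 else 0

omit [DecidableEq V] in
lemma add_self_two (f : V → ZMod 2) : f + f = 0 := by
  ext v; exact CharTwo.add_self_eq_zero _

lemma bd_single {x y : V} (h : x ≠ y) : bd {s(x, y)} = pt x + pt y := by
  ext v
  simp only [bd, pt, Finset.sum_singleton, Sym2.mem_iff, Pi.add_apply]
  by_cases h1 : v = x <;> by_cases h2 : v = y <;> simp_all

lemma bd_union {A B : Finset (Sym2 V)} (h : Disjoint A B) : bd (A ∪ B) = bd A + bd B := by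
  ext v; simp [bd, Finset.sum_union h]

lemma bd_symmDiff (A B : Finset (Sym2 V)) : bd (symmDiff A B) = bd A + bd B := by
  have h1 : bd A = bd (A \ B) + bd (A ∩ B) := by
    rw [← bd_union (Finset.disjoint_sdiff_inter A B), Finset.sdiff_union_inter]
  have h2 : bd B = bd (B \ A) + bd (A ∩ B) := by
    rw [Finset.inter_comm, ← bd_union (Finset.disjoint_sdiff_inter B A), Finset.sdiff_union_inter]
  have h3 : bd (symmDiff A B) = bd (A \ B) + bd (B \ A) := by
    rw [← bd_union disjoint_sdiff_sdiff]; rfl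
  have h4 := add_self_two (bd (A ∩ B))
  rw [h1, h2, h3]
  calc _ = bd (A \ B) + bd (B \ A) + 0 := by rw [add_zero]
    _ = _ := by rw [← h4]; abel

/-- The boundary of the edge set of a path consists of its two ends (none, if they agree). -/
lemma bd_path {G : SimpleGraph V} {x y : V} (p : G.Walk x y) (hp : p.IsPath) :
    bd p.edges.toFinset = pt x + pt y := by
  induction p with
  | nil =>
    rw [add_self_two]
    ext v; simp [bd]
  | @cons u v w h p ih =>
    rw [SimpleGraph.Walk.cons_isPath_iff] at hp
    have hn : s(u, v) ∉ p.edges := fun hm => hp.2 (p.fst_mem_support_of_mem_edges hm)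
    have : (SimpleGraph.Walk.cons h p).edges.toFinset = {s(u, v)} ∪ p.edges.toFinset := by
      ext e; simp
    rw [this, bd_union (by simpa using hn), bd_single h.ne, ih hp.1]
    have h4 := add_self_two (pt v)
    calc _ = pt u + pt w + (pt v + pt v) := by abel
      _ = _ := by rw [h4, add_zero]

/-- An odd vertex of an edge set `D` is joined by a walk in `D` to a different odd vertex. -/
lemma exists_walk {G : SimpleGraph V} (n : ℕ) :
    ∀ (D : Finset (Sym2 V)), D.card = n → (D : Set (Sym2 V)) ⊆ G.edgeSet →
      ∀ a, bd D a = 1 → ∃ b, b ≠ a ∧ bd D b = 1 ∧ ∃ p : G.Walk a b, ∀ e ∈ p.edges, e ∈ D := by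
  induction n with
  | zero =>
    intro D hD _ a ha
    rw [Finset.card_eq_zero] at hD
    simp [hD, bd] at ha
  | succ n ih =>
    intro D hD hE a ha
    have : ∃ e ∈ D, a ∈ e := by
      by_contra! hc
      have : bd D a = 0 := Finset.sum_eq_zero fun e he => by simp [hc e he]
      rw [this] at ha; exact absurd ha (by decide)
    obtain ⟨e, he, hae⟩ := this
    obtain ⟨c, rfl⟩ := hae
    have hac : G.Adj a c := hE he
    by_cases hc : bd D c = 1
    · exact ⟨c, hac.ne', hc, .cons hac .nil, by simpa using he⟩
    have hDs : bd D = bd (D.erase s(a, c)) + (pt a + pt c) := by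
      rw [← bd_single hac.ne, ← bd_union (by simp)]
      congr 1
      rw [Finset.union_comm, ← Finset.insert_eq, Finset.insert_erase he]
    have key : ∀ x y z : ZMod 2, x = y + z → y = x + z := by decide
    have hc0 : bd D c = 0 := by
      have : ∀ x : ZMod 2, x ≠ 1 → x = 0 := by decide
      exact this _ hc
    have hac' := hac.ne
    have hc1 : bd (D.erase s(a, c)) c = 1 := by
      rw [key _ _ _ (congrFun hDs c), hc0]; simp [pt, hac'.symm]
    obtain ⟨b, hbc, hb, p, hp⟩ := ih (D.erase s(a, c)) (by
        rw [Finset.card_erase_of_mem he, hD]; rfl)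
      ((Finset.coe_subset.2 (Finset.erase_subset _ _)).trans hE) c hc1
    have hba : b ≠ a := by
      rintro rfl
      rw [key _ _ _ (congrFun hDs b), ha] at hb
      simp [pt, hac'] at hb
    refine ⟨b, hba, ?_, .cons hac p, ?_⟩
    · rw [hDs]; simp [hb, pt, hba, hbc]
    · intro e he'
      rw [SimpleGraph.Walk.edges_cons, List.mem_cons] at he'
      rcases he' with rfl | he'
      · exact he
      · exact Finset.mem_of_mem_erase (hp e he')

/-! ### Weights and minimum joins -/

/-- Switching along `D` changes the size of an edge set by the weight of `D`. -/
lemma card_symmDiff_wt (J D : Finset (Sym2 V)) :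
    ((symmDiff J D).card : ℤ) = J.card + ∑ e ∈ D, edgeWt (J : Set (Sym2 V)) e := by
  have h1 : ∑ e ∈ D, edgeWt (J : Set (Sym2 V)) e = (D \ J).card - (D ∩ J).card := by
    rw [← Finset.sum_inter_add_sum_sdiff D J]
    rw [Finset.sum_congr rfl (g := fun _ => (-1 : ℤ)), Finset.sum_congr rfl (s₁ := D \ J)
      (g := fun _ => (1 : ℤ))]
    · simp; ring
    · intro e he; simp [edgeWt, (Finset.mem_sdiff.1 he).2]
    · intro e he; simp [edgeWt, (Finset.mem_inter.1 he).2]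
  have h2 : (symmDiff J D).card = (J \ D).card + (D \ J).card := by
    rw [← Finset.card_union_of_disjoint disjoint_sdiff_sdiff]; rfl
  have h3 := Finset.card_sdiff_add_card_inter J D
  rw [Finset.inter_comm] at h3
  rw [h1, h2]; push_cast; omega

/-- The minimum size of an edge set of `G` with boundary `t` (junk value `0` if there is none;
it is used only for `Feas`ible `t`). Integer valued, for the sake of subtraction. -/
noncomputable def mu (G : SimpleGraph V) (t : V → ZMod 2) : ℤ :=
  ((sInf {n : ℕ | ∃ J : Finset (Sym2 V), (J : Set (Sym2 V)) ⊆ G.edgeSet ∧ bd J = t ∧ J.card = n} :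
    ℕ) : ℤ)

/-- The function `t` is the boundary of some edge set of `G`. -/
def Feas (G : SimpleGraph V) (t : V → ZMod 2) : Prop :=
  ∃ J : Finset (Sym2 V), (J : Set (Sym2 V)) ⊆ G.edgeSet ∧ bd J = t

variable {G : SimpleGraph V}

lemma mu_le {J : Finset (Sym2 V)} (hJ : (J : Set (Sym2 V)) ⊆ G.edgeSet) :
    mu G (bd J) ≤ J.card := by
  have h : sInf {n : ℕ | ∃ J' : Finset (Sym2 V), (J' : Set (Sym2 V)) ⊆ G.edgeSet ∧
      bd J' = bd J ∧ J'.card = n} ≤ J.card := Nat.sInf_le ⟨J, hJ, rfl, rfl⟩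
  unfold mu
  exact_mod_cast h

lemma Feas.exists_min {t : V → ZMod 2} (h : Feas G t) :
    ∃ J : Finset (Sym2 V), (J : Set (Sym2 V)) ⊆ G.edgeSet ∧ bd J = t ∧ (J.card : ℤ) = mu G t := by
  obtain ⟨J, h1, h2⟩ := h
  obtain ⟨J', h1', h2', h3'⟩ := Nat.sInf_mem (s := {n : ℕ | ∃ J : Finset (Sym2 V),
    (J : Set (Sym2 V)) ⊆ G.edgeSet ∧ bd J = t ∧ J.card = n}) ⟨J.card, J, h1, h2, rfl⟩
  exact ⟨J', h1', h2', by unfold mu; exact_mod_cast h3'⟩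

lemma symmDiff_sub {A B : Finset (Sym2 V)} (hA : (A : Set (Sym2 V)) ⊆ G.edgeSet)
    (hB : (B : Set (Sym2 V)) ⊆ G.edgeSet) : ((symmDiff A B : Finset _) : Set (Sym2 V)) ⊆ G.edgeSet := by
  intro e he
  rw [Finset.mem_coe, Finset.mem_symmDiff] at he
  rcases he with he | he
  · exact hA he.1
  · exact hB he.1

lemma Feas.add_edge {t : V → ZMod 2} (h : Feas G t) {x y : V} (hxy : G.Adj x y) :
    Feas G (t + pt x + pt y) := by
  obtain ⟨J, h1, rfl⟩ := h
  exact ⟨symmDiff J {s(x, y)}, symmDiff_sub h1 (by simpa using hxy), by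
    rw [bd_symmDiff, bd_single hxy.ne, add_assoc]⟩

lemma add_pair_cancel (t : V → ZMod 2) (x y : V) : t + pt x + pt y + pt x + pt y = t := by
  have h1 := add_self_two (pt x)
  have h2 := add_self_two (pt y)
  calc _ = t + (pt x + pt x) + (pt y + pt y) := by abel
    _ = t := by rw [h1, h2, add_zero, add_zero]

lemma mu_add_edge_le {t : V → ZMod 2} (h : Feas G t) {x y : V} (hxy : G.Adj x y) :
    mu G (t + pt x + pt y) ≤ mu G t + 1 := by
  obtain ⟨J, h1, rfl, h3⟩ := h.exists_min
  have hs : ((symmDiff J {s(x, y)} : Finset _) : Set (Sym2 V)) ⊆ G.edgeSet :=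
    symmDiff_sub h1 (by simpa using hxy)
  have := mu_le hs
  rw [bd_symmDiff, bd_single hxy.ne, ← add_assoc, card_symmDiff_wt, Finset.sum_singleton, h3] at this
  refine this.trans ?_
  unfold edgeWt
  split_ifs <;> omega

lemma le_mu_add_edge {t : V → ZMod 2} (h : Feas G t) {x y : V} (hxy : G.Adj x y) :
    mu G t - 1 ≤ mu G (t + pt x + pt y) := by
  have := mu_add_edge_le (h.add_edge hxy) hxy
  rw [add_pair_cancel] at this
  omega

/-- Deleting an edge of a minimum edge set gains one. -/
lemma mu_erase {J : Finset (Sym2 V)} (hJ : (J : Set (Sym2 V)) ⊆ G.edgeSet)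
    (hm : (J.card : ℤ) = mu G (bd J)) {x y : V} (hxy : s(x, y) ∈ J) :
    mu G (bd J + pt x + pt y) = mu G (bd J) - 1 := by
  have hadj : G.Adj x y := hJ hxy
  refine le_antisymm ?_ (le_mu_add_edge ⟨J, hJ, rfl⟩ hadj)
  have hs : ((symmDiff J {s(x, y)} : Finset _) : Set (Sym2 V)) ⊆ G.edgeSet :=
    symmDiff_sub hJ (by simpa using hadj)
  have := mu_le hs
  rw [bd_symmDiff, bd_single hadj.ne, ← add_assoc, card_symmDiff_wt, Finset.sum_singleton] at this
  have hx : edgeWt (J : Set (Sym2 V)) s(x, y) = -1 := by simp [edgeWt, hxy]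
  omega

/-- Exchange property: switch two minimum edge sets along a path of their symmetric difference
that starts at `a`. The path is negated between the two sets, so the total size is kept. -/
lemma exchange {X Y : V → ZMod 2} (hX : Feas G X) (hY : Feas G Y) {a : V}
    (ha : X a + Y a = 1) :
    ∃ b, b ≠ a ∧ X b + Y b = 1 ∧
      mu G (X + pt a + pt b) + mu G (Y + pt a + pt b) ≤ mu G X + mu G Y := by
  obtain ⟨A, hA, rfl, hAm⟩ := hX.exists_min
  obtain ⟨B, hB, rfl, hBm⟩ := hY.exists_min
  obtain ⟨b, hba, hb, p, hp⟩ := exists_walk (G := G) _ (symmDiff A B) rfl (symmDiff_sub hA hB) a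
    (by rw [bd_symmDiff]; exact ha)
  rw [bd_symmDiff] at hb
  refine ⟨b, hba, hb, ?_⟩
  set P := p.bypass.edges.toFinset with hP
  have hPb : bd P = pt a + pt b := bd_path _ p.bypass_isPath
  have hPD : P ⊆ symmDiff A B := fun e he =>
    hp e (p.edges_bypass_subset_edges (by simpa [hP] using he))
  have hPE : (P : Set (Sym2 V)) ⊆ G.edgeSet := fun e he => symmDiff_sub hA hB (hPD he)
  have h1 := mu_le (symmDiff_sub hA hPE)
  have h2 := mu_le (symmDiff_sub hB hPE)
  rw [bd_symmDiff, hPb, ← add_assoc, card_symmDiff_wt] at h1 h2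
  have h3 : ∑ e ∈ P, edgeWt (A : Set (Sym2 V)) e + ∑ e ∈ P, edgeWt (B : Set (Sym2 V)) e = 0 := by
    rw [← Finset.sum_add_distrib]
    refine Finset.sum_eq_zero fun e he => ?_
    have := hPD he
    rw [Finset.mem_symmDiff] at this
    rcases this with h | h <;> simp [edgeWt, h.1, h.2]
  omega

/-! ### Level components -/

omit [DecidableEq V] in
/-- Propagation of a property along the edges inside a connected vertex set. -/
lemma conn_induct {K : Set V} (hK : (G.induce K).Preconnected) (p : V → Prop)
    (step : ∀ u ∈ K, ∀ v ∈ K, G.Adj u v → p u → p v) {k y : V} (hk : k ∈ K) (hy : y ∈ K)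
    (h : p k) : p y := by
  obtain ⟨w⟩ := hK ⟨k, hk⟩ ⟨y, hy⟩
  have : ∀ (a b : K) (_ : (G.induce K).Walk a b), p a → p b := by
    intro a b w
    induction w with
    | nil => exact id
    | @cons u v _ h _ ih => exact fun hu => ih (step u u.2 v v.2 h hu)
  exact this _ _ w h

/-- If `K` is a component of the set of `v` with `mu G (S + pt v) ≤ i`, then for `k ∈ K` no
minimum edge set with boundary `S + pt k` crosses the cut of `K`. If one contained the cut edge
`yz`, the exchange property would carry this along the edges of `K` over to `k = y`, where
deleting `yz` would bring `z` below its level. -/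
lemma no_cross {S : V → ZMod 2} {K : Set V} {i : ℤ} (hK : (G.induce K).Preconnected)
    (hfe : ∀ k ∈ K, Feas G (S + pt k)) (hle : ∀ k ∈ K, mu G (S + pt k) ≤ i)
    (hout : ∀ y ∈ K, ∀ z, z ∉ K → G.Adj y z → i + 1 ≤ mu G (S + pt z))
    {k : V} (hk : k ∈ K) {J : Finset (Sym2 V)} (hJ : (J : Set (Sym2 V)) ⊆ G.edgeSet)
    (hbd : bd J = S + pt k) (hm : (J.card : ℤ) = mu G (S + pt k))
    {y z : V} (hy : y ∈ K) (hz : z ∉ K) : s(y, z) ∉ J := by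
  intro hyz
  have hadj : G.Adj y z := hJ hyz
  have cancel : ∀ a : V, ∀ t : V → ZMod 2, t + pt a + pt a = t := fun a t => by
    rw [add_assoc, add_self_two, add_zero]
  have hfz : i + 1 ≤ mu G (S + pt z) := hout y hy z hz hadj
  have hFz : Feas G (S + pt z) := by
    have := (hfe y hy).add_edge hadj
    rwa [cancel] at this
  have hfy : i ≤ mu G (S + pt y) := by
    have := mu_add_edge_le (hfe y hy) hadj
    rw [cancel] at this
    omega
  have hstart : mu G (S + pt k + pt y + pt z) ≤ mu G (S + pt k) - 1 := by
    have := mu_erase hJ (by rw [hbd]; exact hm) hyz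
    rw [hbd] at this; exact this.le
  have hno : ¬ mu G (S + pt y + pt y + pt z) ≤ mu G (S + pt y) - 1 := by
    rw [cancel]
    have := hle y hy
    omega
  refine hno (conn_induct hK (fun k => mu G (S + pt k + pt y + pt z) ≤ mu G (S + pt k) - 1)
    ?_ hk hy hstart)
  intro u hu v hv huv hAu
  have hfu := hle u hu
  have hfv := hle v hv
  have hFX : Feas G (S + pt u + pt y + pt z) := (hfe u hu).add_edge hadj
  by_cases hvy : v = y
  · exfalso
    subst hvy
    have := mu_add_edge_le hFX huv
    have e : S + pt u + pt v + pt z + pt u + pt v = S + pt z := by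
      rw [← add_pair_cancel (S + pt z) u v]; abel
    rw [e] at this
    omega
  have hvz : v ≠ z := fun h => hz (h ▸ hv)
  have hvu : v ≠ u := huv.ne'
  obtain ⟨b, hbv, hb1, hb⟩ := exchange hFX (hfe v hv) (a := v) (by
    have : ∀ s : ZMod 2, s + (s + 1) = 1 := by decide
    simpa [pt, hvy, hvz, hvu] using this _)
  have hbc : b = u ∨ b = y ∨ b = z := by
    by_contra! hc
    have : ∀ s : ZMod 2, s + s ≠ 1 := by decide
    exact this (S b) (by simpa [pt, hc.1, hc.2.1, hc.2.2, hbv] using hb1)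
  rcases hbc with rfl | rfl | rfl
  · have e1 : S + pt b + pt y + pt z + pt v + pt b = S + pt v + pt y + pt z := by
      rw [← cancel b (S + pt v + pt y + pt z)]; abel
    rw [e1, cancel] at hb
    omega
  · exfalso
    have e1 : S + pt u + pt b + pt z + pt v + pt b = S + pt z + pt u + pt v := by
      rw [← cancel b (S + pt z + pt u + pt v)]; abel
    rw [e1, cancel] at hb
    have := le_mu_add_edge hFz huv
    omega
  · exfalso
    have e1 : S + pt u + pt y + pt b + pt v + pt b = S + pt y + pt u + pt v := by
      rw [← cancel b (S + pt y + pt u + pt v)]; abel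
    rw [e1, cancel] at hb
    have := le_mu_add_edge (hfe y hy) huv
    omega

/-- Let `K` be a component of the set of `v` with `mu G (S + pt v) ≤ i`, and let the cut edge `yz`
lie in a minimum edge set with boundary `S + pt r`, `r ∉ K` (this is `hyz`). Moving the root from `r` to `z`
shifts all levels on `K` by the same constant and keeps the neighbours of `K` above them. -/
lemma shift_root {S : V → ZMod 2} {K : Set V} {i : ℤ} (hK : (G.induce K).Preconnected)
    (hfe : ∀ k ∈ K, Feas G (S + pt k)) (hle : ∀ k ∈ K, mu G (S + pt k) ≤ i)
    (hout : ∀ y ∈ K, ∀ z, z ∉ K → G.Adj y z → i + 1 ≤ mu G (S + pt z))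
    {r y z : V} (hr : r ∉ K) (hy : y ∈ K) (hz : z ∉ K) (hadj : G.Adj y z)
    (hFr : Feas G (S + pt r))
    (hyz : mu G (S + pt r + pt z + pt y) = mu G (S + pt r) - 1) :
    (∀ k ∈ K, Feas G (S + pt r + pt z + pt k)) ∧
    (∀ k ∈ K, mu G (S + pt r + pt z + pt k) ≤ mu G (S + pt r) - 1) ∧
    (∀ y' ∈ K, ∀ z', z' ∉ K → G.Adj y' z' →
      mu G (S + pt r) - 1 + 1 ≤ mu G (S + pt r + pt z + pt z')) := by
  have cancel : ∀ a : V, ∀ t : V → ZMod 2, t + pt a + pt a = t := fun a t => by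
    rw [add_assoc, add_self_two, add_zero]
  have hfz : i + 1 ≤ mu G (S + pt z) := hout y hy z hz hadj
  have hFz : Feas G (S + pt z) := by
    have := (hfe y hy).add_edge hadj
    rwa [cancel] at this
  have hfy : ∀ y' ∈ K, ∀ z', z' ∉ K → G.Adj y' z' → mu G (S + pt y') = i := by
    intro y' hy' z' hz' h
    have h1 := mu_add_edge_le (hfe y' hy') h
    rw [cancel] at h1
    have h2 := hout y' hy' z' hz' h
    have h3 := hle y' hy'
    omega
  have hF2 : ∀ k ∈ K, Feas G (S + pt r + pt z + pt k) := by
    intro k hk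
    refine conn_induct hK (fun k => Feas G (S + pt r + pt z + pt k)) ?_ hy hk
      (hFr.add_edge hadj.symm)
    intro u _ v _ huv h
    have := Feas.add_edge h huv
    rwa [cancel] at this
  have step : ∀ u ∈ K, ∀ v ∈ K, G.Adj u v →
      mu G (S + pt r + pt z + pt u) ≤ mu G (S + pt u) + (mu G (S + pt r) - 1 - i) →
      mu G (S + pt r + pt z + pt v) - mu G (S + pt v) ≤
        mu G (S + pt r + pt z + pt u) - mu G (S + pt u) := by
    intro u hu v hv huv hb0
    have hfu := hle u hu
    have hfv := hle v hv
    have hvz : v ≠ z := fun h => hz (h ▸ hv)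
    have hvr : v ≠ r := fun h => hr (h ▸ hv)
    have hvu : v ≠ u := huv.ne'
    obtain ⟨b, hbv, hb1, hb⟩ := exchange (hF2 u hu) (hfe v hv) (a := v) (by
      have : ∀ s : ZMod 2, s + (s + 1) = 1 := by decide
      simpa [pt, hvr, hvz, hvu] using this _)
    have hbc : b = u ∨ b = r ∨ b = z := by
      by_contra! hc
      have : ∀ s : ZMod 2, s + s ≠ 1 := by decide
      exact this (S b) (by simpa [pt, hc.1, hc.2.1, hc.2.2, hbv] using hb1)
    rw [cancel] at hb
    rcases hbc with rfl | rfl | rfl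
    · have e1 : S + pt r + pt z + pt b + pt v + pt b = S + pt r + pt z + pt v := by
        rw [← cancel b (S + pt r + pt z + pt v)]; abel
      rw [e1] at hb
      omega
    · exfalso
      have e1 : S + pt b + pt z + pt u + pt v + pt b = S + pt z + pt u + pt v := by
        rw [← cancel b (S + pt z + pt u + pt v)]; abel
      rw [e1] at hb
      have := le_mu_add_edge hFz huv
      omega
    · exfalso
      have e1 : S + pt r + pt b + pt u + pt v + pt b = S + pt r + pt u + pt v := by
        rw [← cancel b (S + pt r + pt u + pt v)]; abel
      rw [e1] at hb
      have := le_mu_add_edge hFr huv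
      omega
  have hconst : ∀ k ∈ K,
      mu G (S + pt r + pt z + pt k) = mu G (S + pt k) + (mu G (S + pt r) - 1 - i) := by
    intro k hk
    refine conn_induct hK (fun k =>
      mu G (S + pt r + pt z + pt k) = mu G (S + pt k) + (mu G (S + pt r) - 1 - i)) ?_ hy hk ?_
    · intro u hu v hv huv h
      have h1 := step u hu v hv huv h.le
      have h2 := step v hv u hu huv.symm (by omega)
      omega
    · have := hfy y hy z hz hadj
      omega
  refine ⟨hF2, fun k hk => ?_, fun y' hy' z' hz' h => ?_⟩
  · have h1 := hconst k hk
    have h2 := hle k hk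
    omega
  · by_contra! hlt
    have hfy' := hfy y' hy' z' hz' h
    have hfz' := hout y' hy' z' hz' h
    have hcy' := hconst y' hy'
    have hFX : Feas G (S + pt r + pt z + pt z') := by
      have := (hF2 y' hy').add_edge h
      rwa [cancel] at this
    have hyz' : y' ≠ z := fun h => hz (h ▸ hy')
    have hyr : y' ≠ r := fun h => hr (h ▸ hy')
    obtain ⟨b, hbv, hb1, hb⟩ := exchange hFX (hfe y' hy') (a := y') (by
      have : ∀ s : ZMod 2, s + (s + 1) = 1 := by decide
      simpa [pt, hyr, hyz', h.ne] using this _)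
    have hbc : b = r ∨ b = z ∨ b = z' := by
      by_contra! hc
      have : ∀ s : ZMod 2, s + s ≠ 1 := by decide
      exact this (S b) (by simpa [pt, hc.1, hc.2.1, hc.2.2, hbv] using hb1)
    rw [cancel] at hb
    rcases hbc with rfl | rfl | rfl
    · have e1 : S + pt b + pt z + pt z' + pt y' + pt b = S + pt z + pt y' + pt z' := by
        rw [← cancel b (S + pt z + pt y' + pt z')]; abel
      rw [e1] at hb
      have := le_mu_add_edge hFz h
      omega
    · have e1 : S + pt r + pt b + pt z' + pt y' + pt b = S + pt r + pt y' + pt z' := by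
        rw [← cancel b (S + pt r + pt y' + pt z')]; abel
      rw [e1] at hb
      have := le_mu_add_edge hFr h
      omega
    · have e1 : S + pt r + pt z + pt b + pt y' + pt b = S + pt r + pt z + pt y' := by
        rw [← cancel b (S + pt r + pt z + pt y')]; abel
      rw [e1] at hb
      omega

/-- Inside `K`, an edge set of nonpositive weight joins the root `y` of `K` to any `x ∈ K`. It is
the part inside `K` of the symmetric difference of `F - yz` with a minimum edge set
belonging to `x`; neither of the two crosses the cut of `K`. -/
lemma exists_inner {S : V → ZMod 2} {K : Set V} {i : ℤ} (hK : (G.induce K).Preconnected)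
    (hfe : ∀ k ∈ K, Feas G (S + pt k)) (hle : ∀ k ∈ K, mu G (S + pt k) ≤ i)
    (hout : ∀ y ∈ K, ∀ z, z ∉ K → G.Adj y z → i + 1 ≤ mu G (S + pt z))
    {r y z : V} (hr : r ∉ K) (hy : y ∈ K) (hz : z ∉ K)
    {F : Finset (Sym2 V)} (hF : (F : Set (Sym2 V)) ⊆ G.edgeSet) (hbd : bd F = S + pt r)
    (hm : (F.card : ℤ) = mu G (S + pt r)) (hyz : s(y, z) ∈ F) {x : V} (hx : x ∈ K) :
    ∃ Q : Finset (Sym2 V), (Q : Set (Sym2 V)) ⊆ G.edgeSet ∧ bd Q = pt x + pt y ∧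
      (∀ e ∈ Q, ∀ v ∈ e, v ∈ K) ∧ ∑ e ∈ Q, edgeWt (F : Set (Sym2 V)) e ≤ 0 := by
  classical
  have hadj : G.Adj y z := hF hyz
  have hdel : mu G (S + pt r + pt z + pt y) = mu G (S + pt r) - 1 := by
    have := mu_erase hF (by rw [hbd]; exact hm) hyz
    rw [hbd] at this
    rw [← this]; congr 1; abel
  obtain ⟨h2f, h2le, h2out⟩ := shift_root hK hfe hle hout hr hy hz hadj ⟨F, hF, hbd⟩ hdel
  set J := F.erase s(y, z) with hJdef
  have hJE : (J : Set (Sym2 V)) ⊆ G.edgeSet := fun e he => hF (Finset.mem_of_mem_erase he)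
  have hJbd : bd J = S + pt r + pt z + pt y := by
    have h1 : bd F = bd J + (pt y + pt z) := by
      rw [← bd_single hadj.ne, ← bd_union (by simp [hJdef])]
      congr 1
      rw [Finset.union_comm, ← Finset.insert_eq, Finset.insert_erase hyz]
    rw [← hbd, h1]
    rw [show bd J + (pt y + pt z) + pt z + pt y = bd J + pt y + pt z + pt y + pt z by abel,
      add_pair_cancel]
  have hJm : (J.card : ℤ) = mu G (S + pt r + pt z + pt y) := by
    have := Finset.card_erase_add_one hyz
    rw [hdel, ← hm, ← this]; push_cast; ring
  obtain ⟨X, hXE, hXbd, hXm⟩ := (h2f x hx).exists_min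
  set D := symmDiff J X with hD
  have hDE : (D : Set (Sym2 V)) ⊆ G.edgeSet := symmDiff_sub hJE hXE
  have hDcross : ∀ u ∈ K, ∀ v, v ∉ K → s(u, v) ∉ D := by
    intro u hu v hv hmem
    rw [hD, Finset.mem_symmDiff] at hmem
    rcases hmem with h | h
    · exact no_cross hK h2f h2le h2out hy hJE hJbd hJm hu hv h.1
    · exact no_cross hK h2f h2le h2out hx hXE hXbd hXm hu hv h.1
  have hin : ∀ e ∈ D, ∀ v ∈ e, v ∈ K → ∀ u ∈ e, u ∈ K := by
    intro e he v hv hvK u hu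
    obtain ⟨w, rfl⟩ := hv
    rcases Sym2.mem_iff.1 hu with rfl | rfl
    · exact hvK
    · by_contra hc
      exact hDcross v hvK u hc he
  have hDbd : bd D = pt x + pt y := by
    rw [hD, bd_symmDiff, hJbd, hXbd]
    rw [show S + pt r + pt z + pt y + (S + pt r + pt z + pt x) =
      ((S + pt r + pt z) + (S + pt r + pt z)) + (pt x + pt y) by abel, add_self_two, zero_add]
  set Q := D.filter (fun e => ∀ v ∈ e, v ∈ K) with hQ
  set R := D.filter (fun e => ¬ ∀ v ∈ e, v ∈ K) with hR
  have hQR : Q ∪ R = D := Finset.filter_union_filter_not_eq _ _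
  have hQRd : Disjoint Q R := Finset.disjoint_filter_filter_not _ _ _
  have hQbd : bd Q = pt x + pt y := by
    rw [← hDbd]
    ext v
    by_cases hv : v ∈ K
    · rw [← hQR, bd_union hQRd]
      have : bd R v = 0 := by
        refine Finset.sum_eq_zero fun e he => ?_
        have := Finset.mem_filter.1 he
        rw [if_neg]
        exact fun hve => this.2 (hin e this.1 v hve hv)
      simp [this]
    · have h1 : bd Q v = 0 := by
        refine Finset.sum_eq_zero fun e he => ?_
        rw [if_neg]
        exact fun hve => hv ((Finset.mem_filter.1 he).2 v hve)
      rw [h1, hDbd]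
      have h2 : v ≠ x := fun h => hv (h ▸ hx)
      have h3 : v ≠ y := fun h => hv (h ▸ hy)
      simp [pt, h2, h3]
  have hRbd : bd R = 0 := by
    have := bd_union hQRd
    rw [hQR, hQbd, hDbd] at this
    simpa using this.symm
  refine ⟨Q, fun e he => hDE (Finset.mem_filter.1 he).1, hQbd,
    fun e he => (Finset.mem_filter.1 he).2, ?_⟩
  have hwQ : ∑ e ∈ Q, edgeWt (F : Set (Sym2 V)) e = ∑ e ∈ Q, edgeWt (J : Set (Sym2 V)) e := by
    refine Finset.sum_congr rfl fun e he => ?_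
    have hne : e ≠ s(y, z) := by
      rintro rfl
      exact hz ((Finset.mem_filter.1 he).2 z (by simp))
    simp [edgeWt, hJdef, hne]
  have hwD : (X.card : ℤ) = J.card + ∑ e ∈ D, edgeWt (J : Set (Sym2 V)) e := by
    rw [← card_symmDiff_wt, hD, symmDiff_symmDiff_cancel_left]
  have hwR : 0 ≤ ∑ e ∈ R, edgeWt (J : Set (Sym2 V)) e := by
    have h1 := mu_le (symmDiff_sub hJE (B := R) fun e he => hDE (Finset.mem_filter.1 he).1)
    rw [bd_symmDiff, hRbd, add_zero, card_symmDiff_wt, hJbd, hJm] at h1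
    omega
  rw [← hQR, Finset.sum_union hQRd] at hwD
  have h1 := h2le x hx
  rw [hwQ]
  omega

/-! ### Distances as minimum join sizes -/

lemma walkWt_eq (F : Set (Sym2 V)) {x y : V} (p : G.Walk x y) (hp : p.IsPath) :
    walkWt F p = ∑ e ∈ p.edges.toFinset, edgeWt F e := by
  rw [walkWt, List.sum_toFinset _ hp.isTrail.edges_nodup]

/-- Paths have weight at least the change in minimum join size between their ends. -/
lemma le_walkWt {F : Finset (Sym2 V)} (hF : (F : Set (Sym2 V)) ⊆ G.edgeSet)
    {x y : V} (p : G.Walk x y) (hp : p.IsPath) :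
    mu G (bd F + pt x + pt y) - F.card ≤ walkWt (F : Set (Sym2 V)) p := by
  have h1 := mu_le (symmDiff_sub hF (B := p.edges.toFinset) fun e he =>
    p.edges_subset_edgeSet (by simpa using he))
  rw [bd_symmDiff, bd_path p hp, card_symmDiff_wt, ← walkWt_eq _ p hp, ← add_assoc] at h1
  omega

lemma bddBelow_wt {F : Finset (Sym2 V)} (hF : (F : Set (Sym2 V)) ⊆ G.edgeSet) (x y : V) :
    BddBelow {n : ℤ | ∃ p : G.Walk x y, p.IsPath ∧ walkWt (F : Set (Sym2 V)) p = n} :=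
  ⟨mu G (bd F + pt x + pt y) - F.card, by
    rintro n ⟨p, hp, rfl⟩
    exact le_walkWt hF p hp⟩

/-- The distance between the ends is at most the weight of any edge set joining them: such
an edge set contains a path, and what remains has nonnegative weight. -/
lemma distF_le {F : Finset (Sym2 V)} (hF : (F : Set (Sym2 V)) ⊆ G.edgeSet)
    (hm : (F.card : ℤ) = mu G (bd F)) {x y : V} {D : Finset (Sym2 V)}
    (hD : (D : Set (Sym2 V)) ⊆ G.edgeSet) (hbd : bd D = pt x + pt y) :
    distF G (F : Set (Sym2 V)) x y ≤ ∑ e ∈ D, edgeWt (F : Set (Sym2 V)) e := by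
  have hw : ∃ p : G.Walk x y, ∀ e ∈ p.edges, e ∈ D := by
    by_cases hxy : x = y
    · subst hxy; exact ⟨.nil, by simp⟩
    · obtain ⟨b, hb1, hb2, p, hp⟩ := exists_walk (G := G) _ D rfl hD x (by
        rw [hbd]; simp [pt, hxy])
      have : b = y := by
        by_contra hby
        rw [hbd] at hb2
        simp [pt, hb1, hby] at hb2
      subst this
      exact ⟨p, hp⟩
  obtain ⟨p, hp⟩ := hw
  set P := p.bypass.edges.toFinset with hP
  have hPD : P ⊆ D := fun e he => hp e (p.edges_bypass_subset_edges (by simpa [hP] using he))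
  have h1 : distF G (F : Set (Sym2 V)) x y ≤ ∑ e ∈ P, edgeWt (F : Set (Sym2 V)) e :=
    csInf_le (bddBelow_wt hF x y) ⟨p.bypass, p.bypass_isPath, walkWt_eq _ _ p.bypass_isPath⟩
  have hbd0 : bd (D \ P) = 0 := by
    have := bd_union (A := D \ P) (B := P) Finset.sdiff_disjoint
    rw [Finset.sdiff_union_of_subset hPD, hbd, hP, bd_path _ p.bypass_isPath] at this
    simpa using this.symm
  have h2 := mu_le (symmDiff_sub hF (B := D \ P) fun e he =>
    hD (Finset.sdiff_subset (s := D) (t := P) he))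
  rw [bd_symmDiff, hbd0, add_zero, card_symmDiff_wt] at h2
  have h3 := Finset.sum_sdiff (f := edgeWt (F : Set (Sym2 V))) hPD
  omega

lemma feas_of_reachable {t : V → ZMod 2} (h : Feas G t) {x y : V} (hxy : G.Reachable x y) :
    Feas G (t + pt x + pt y) := by
  obtain ⟨J, hJ, rfl⟩ := h
  obtain ⟨p⟩ := hxy
  exact ⟨symmDiff J p.bypass.edges.toFinset, symmDiff_sub hJ fun e he =>
    p.bypass.edges_subset_edgeSet (by simpa using he), by
    rw [bd_symmDiff, bd_path _ p.bypass_isPath, add_assoc]⟩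

/-- Distances between vertices of the same component measure the change in minimum join size. -/
lemma mu_eq_distF {F : Finset (Sym2 V)} (hF : (F : Set (Sym2 V)) ⊆ G.edgeSet)
    (hm : (F.card : ℤ) = mu G (bd F)) {x y : V} (hxy : G.Reachable x y) :
    mu G (bd F + pt x + pt y) = F.card + distF G (F : Set (Sym2 V)) x y := by
  apply le_antisymm
  · obtain ⟨p⟩ := hxy
    obtain ⟨q, hq, hq'⟩ := Int.csInf_mem
      (s := {n : ℤ | ∃ p : G.Walk x y, p.IsPath ∧ walkWt (F : Set (Sym2 V)) p = n})
      ⟨_, p.bypass, p.bypass_isPath, rfl⟩ (bddBelow_wt hF x y)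
    have := le_walkWt hF q hq
    rw [hq'] at this
    unfold distF
    omega
  · obtain ⟨J, hJ, hJb, hJm⟩ := (feas_of_reachable ⟨F, hF, rfl⟩ hxy).exists_min
    have := distF_le hF hm (D := symmDiff F J) (x := x) (y := y) (symmDiff_sub hF hJ) (by
      rw [bd_symmDiff, hJb, add_assoc, ← add_assoc, add_self_two, zero_add])
    have h2 := card_symmDiff_wt F (symmDiff F J)
    rw [symmDiff_symmDiff_cancel_left] at h2
    omega

lemma bd_eq_one_iff (J : Finset (Sym2 V)) (v : V) :
    bd J v = 1 ↔ Odd ({e ∈ (J : Set (Sym2 V)) | v ∈ e}).ncard := by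
  have : {e ∈ (J : Set (Sym2 V)) | v ∈ e} = ((J.filter (fun e => v ∈ e) : Finset _) : Set _) := by
    ext e; simp
  rw [this, Set.ncard_coe_finset, ← ZMod.natCast_eq_one_iff_odd]
  simp [bd, Finset.sum_boole]

lemma min_join_card {T : Set V} {F : Finset (Sym2 V)} (hF : IsMinJoin G T (F : Set (Sym2 V))) :
    (F.card : ℤ) = mu G (bd F) := by
  refine le_antisymm ?_ (mu_le hF.1.1)
  obtain ⟨J, hJ, hJb, hJm⟩ := Feas.exists_min (G := G) ⟨F, hF.1.1, rfl⟩
  have hjoin : IsJoin G T (J : Set (Sym2 V)) := ⟨hJ, fun v => by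
    rw [← bd_eq_one_iff, hJb, bd_eq_one_iff]; exact hF.1.2 v⟩
  have h1 : nu G T ≤ J.card := Nat.sInf_le ⟨J, hjoin, Set.ncard_coe_finset J⟩
  rw [← hF.2, Set.ncard_coe_finset] at h1
  rw [← hJm]; exact_mod_cast h1

end Helpers

/-- With the setup of Statement 0 and `r'` moreover `K`-congruent
to `r` (i.e. `dist_F(r', rK) = dist_F(r', sK) - 1`), if `w_F(P) = dist_F(r', rK)`
then `x = rK`. -/
theorem stmt_1 {V : Type*} [Fintype V] [DecidableEq V]
    (G : SimpleGraph V) (T : Set V) (hbip : G.Colorable 2) (hgraft : IsGraft G T)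
    (F : Set (Sym2 V)) (hF : IsMinJoin G T F)
    (r : V) (K : Set V) (hK : IsDecapDistComp G F r K)
    (rK sK : V) (hadj : G.Adj rK sK) (hbeam : s(rK, sK) ∈ F)
    (hrK : rK ∈ K) (hsK : sK ∉ K)
    (r' : V) (hr' : r' ∉ K)
    (hcong : distF G F r' rK = distF G F r' sK - 1)
    (x : V) (hx : x ∈ K)
    (P : G.Walk r' x) (hP : P.IsPath)
    (hPK : {v | v ∈ P.support} ∩ K = {x})
    (hwt : walkWt F P = distF G F r' rK) :
    x = rK := by
  obtain ⟨F, rfl⟩ : ∃ F' : Finset (Sym2 V), (F' : Set (Sym2 V)) = F :=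
    ⟨(Set.toFinite F).toFinset, by simp⟩
  have hFE : (F : Set (Sym2 V)) ⊆ G.edgeSet := hF.1.1
  have hm := min_join_card hF
  have hbeam' : s(rK, sK) ∈ F := hbeam
  obtain ⟨i, ⟨_, -, hKU, hKc, hKmax⟩, hrK0⟩ := hK
  have hKr : ∀ u ∈ K, G.Reachable rK u := fun u hu =>
    conn_induct hKc.preconnected (fun u => G.Reachable rK u)
      (fun a _ b _ hab h => h.trans hab.reachable) hrK hu (SimpleGraph.Reachable.refl _)
  -- Unreachable vertices have the junk distance `0`, so `K` would contain `sK`.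
  have hreach : G.Reachable r rK := by
    by_contra hn
    have h0 : ∀ v, G.Reachable rK v → distF G (F : Set (Sym2 V)) r v = 0 := by
      intro v hv
      have : {n : ℤ | ∃ p : G.Walk r v, p.IsPath ∧ walkWt (F : Set (Sym2 V)) p = n} = ∅ := by
        ext n
        simp only [Set.mem_ofPred_eq, Set.mem_empty_iff_false, iff_false]
        rintro ⟨p, -, -⟩
        exact hn (SimpleGraph.Reachable.trans ⟨p⟩ hv.symm)
      rw [distF, this, Int.csInf_empty]
    have h1 : distF G (F : Set (Sym2 V)) r rK ≤ i := hKU hrK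
    rw [h0 rK (SimpleGraph.Reachable.refl _)] at h1
    refine hsK (hKmax rK hrK sK ?_ hadj)
    change distF G (F : Set (Sym2 V)) r sK ≤ i
    rw [h0 sK hadj.reachable]
    exact h1
  have hlev : ∀ v, G.Reachable r v →
      mu G (bd F + pt r + pt v) = F.card + distF G (F : Set (Sym2 V)) r v :=
    fun v hv => mu_eq_distF hFE hm hv
  have hS : bd F = bd F + pt r + pt r := by rw [add_assoc, add_self_two, add_zero]
  obtain ⟨Q, hQE, hQb, hQK, hQw⟩ := exists_inner (G := G) (S := bd F + pt r) (K := K)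
    (i := F.card + i) hKc.preconnected
    (fun k hk => feas_of_reachable ⟨F, hFE, rfl⟩ (hreach.trans (hKr k hk)))
    (fun k hk => by
      have h1 : distF G (F : Set (Sym2 V)) r k ≤ i := hKU hk
      rw [hlev k (hreach.trans (hKr k hk))]; omega)
    (fun y hy z hz hyz => by
      have h1 : ¬ distF G (F : Set (Sym2 V)) r z ≤ i := fun h => hz (hKmax y hy z h hyz)
      rw [hlev z ((hreach.trans (hKr y hy)).trans hyz.reachable)]; omega)
    hrK0 hrK hsK hFE hS (by rw [← hS]; exact hm) hbeam' hx
  by_contra hne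
  have hPx : ∀ v ∈ P.support, v ∈ K → v = x := fun v hv hvK => by
    have : v ∈ {v | v ∈ P.support} ∩ K := ⟨hv, hvK⟩
    rwa [hPK] at this
  -- If `x ≠ rK`, then `P`, `Q` and the beam form an edge set joining `r'` to `sK` that is too light.
  have hd1 : Disjoint P.edges.toFinset Q := by
    rw [Finset.disjoint_left]
    intro e heP heQ
    rw [List.mem_toFinset] at heP
    induction e with
    | h a b =>
      have ha := hPx a (P.fst_mem_support_of_mem_edges heP) (hQK _ heQ a (by simp))
      have hb := hPx b (P.snd_mem_support_of_mem_edges heP) (hQK _ heQ b (by simp))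
      exact (P.adj_of_mem_edges heP).ne (ha.trans hb.symm)
  have hd2 : Disjoint (P.edges.toFinset ∪ Q) {s(rK, sK)} := by
    rw [Finset.disjoint_singleton_right, Finset.mem_union, not_or]
    refine ⟨fun h => ?_, fun h => hsK (hQK _ h sK (by simp))⟩
    rw [List.mem_toFinset] at h
    exact hne (hPx rK (P.fst_mem_support_of_mem_edges h) hrK).symm
  have hfin := distF_le (G := G) hFE hm (x := r') (y := sK)
    (D := P.edges.toFinset ∪ Q ∪ {s(rK, sK)}) (by
      intro e he
      simp only [Finset.coe_union, Finset.coe_singleton, Set.mem_union, Finset.mem_coe,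
        List.mem_toFinset, Set.mem_singleton_iff] at he
      rcases he with (he | he) | rfl
      · exact P.edges_subset_edgeSet he
      · exact hQE he
      · exact hadj) (by
      rw [bd_union hd2, bd_union hd1, bd_path P hP, hQb, bd_single hadj.ne]
      have h1 := add_self_two (pt x)
      have h2 := add_self_two (pt rK)
      calc _ = pt r' + pt sK + (pt x + pt x) + (pt rK + pt rK) := by abel
        _ = _ := by rw [h1, h2, add_zero, add_zero])
  rw [Finset.sum_union hd2, Finset.sum_union hd1, ← walkWt_eq _ P hP, hwt,
    Finset.sum_singleton] at hfin
  have hw : edgeWt (F : Set (Sym2 V)) s(rK, sK) = -1 := by simp [edgeWt, hbeam']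
  omega
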